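/- Let N ≥ 2, let β ≥ 0 and Δ > 0 be reals, and let H be an N×N complex Hermitian matrix whose smallest eigenvalue E₁ is simple and satisfies E − E₁ ≥ Δ for every other eigenvalue E of H. Let v be a unit eigenvector of H with eigenvalue E₁, and let A be an N×N complex Hermitian matrix with operator norm ‖A‖. Then |Tr(exp(−2βH)·A)/Tr(exp(−2βH)) − ⟨v, A v⟩| ≤ 2·‖A‖·(N − 1)·e^{−2βΔ}. -/

import Mathlib

open Matrix in
lemma stmt8_avg {N : ℕ} (p : Fin N → ℝ) (a : Fin N → ℂ) (M q : ℝ) (k : Fin N)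
    (hp : ∀ i, 0 < p i) (ha : ∀ i, ‖a i‖ ≤ M) (hq : ∀ i, i ≠ k → p i ≤ q * p k) :
    ‖(∑ i, (p i : ℂ) * a i) / (∑ i, (p i : ℂ)) - a k‖ ≤ 2 * M * ((N : ℝ) - 1) * q := by
  have hM : 0 ≤ M := (norm_nonneg _).trans (ha k)
  set Z : ℝ := ∑ i, p i with hZ
  have hkZ : p k ≤ Z := Finset.single_le_sum (fun i _ => (hp i).le) (Finset.mem_univ k)
  have hZ0 : 0 < Z := (hp k).trans_le hkZ
  have hZc : (∑ i, (p i : ℂ)) = (Z : ℂ) := by rw [hZ]; push_cast; rfl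
  have hZne : (Z : ℂ) ≠ 0 := by exact_mod_cast hZ0.ne'
  have h1 : (∑ i, (p i : ℂ) * a i) / (Z : ℂ) - a k
      = (∑ i ∈ Finset.univ.erase k, (p i : ℂ) * (a i - a k)) / (Z : ℂ) := by
    rw [Finset.sum_erase _ (by simp)]
    rw [div_sub' hZne]
    congr 1
    simp only [mul_sub, Finset.sum_sub_distrib, ← Finset.sum_mul, hZc]
  rw [hZc, h1, norm_div, Complex.norm_real, Real.norm_of_nonneg hZ0.le, div_le_iff₀ hZ0]
  have hcard : ((Finset.univ.erase k).card : ℝ) = (N : ℝ) - 1 := by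
    rw [Finset.card_erase_of_mem (Finset.mem_univ k), Finset.card_univ, Fintype.card_fin]
    have : 1 ≤ N := by have := k.2; omega
    push_cast [this]; rfl
  have hterm : ∀ i ∈ Finset.univ.erase k, ‖(p i : ℂ) * (a i - a k)‖ ≤ q * Z * (2 * M) := by
    intro i hi
    have hik := Finset.ne_of_mem_erase hi
    have hq0 : 0 ≤ q := by
      by_contra h
      push Not at h
      nlinarith [hq i hik, hp i, hp k]
    rw [norm_mul, Complex.norm_real, Real.norm_of_nonneg (hp i).le]
    refine mul_le_mul ((hq i hik).trans (by gcongr)) ?_ (norm_nonneg _) (by positivity)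
    calc _ ≤ ‖a i‖ + ‖a k‖ := norm_sub_le _ _
      _ ≤ _ := by linarith [ha i, ha k]
  calc _ ≤ _ := norm_sum_le_of_le _ hterm
    _ = _ := by rw [Finset.sum_const, nsmul_eq_mul, hcard]; ring

open Matrix in

/-- Thermal expectation values of a gapped Hamiltonian: if the smallest eigenvalue `E₁` of
the Hermitian matrix `H` is simple and every other eigenvalue is at least `E₁ + Δ`, `v` is a
unit ground state, and `A` is a Hermitian observable, then
`|Tr(exp(-2βH) A)/Tr(exp(-2βH)) - ⟨v, A v⟩| ≤ 2 ‖A‖ (N-1) exp(-2βΔ)`, where `‖A‖` is the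
operator norm of `A`. -/
theorem stmt8 (N : ℕ) (hN : 2 ≤ N) (β Δ : ℝ) (hβ : 0 ≤ β) (hΔ : 0 < Δ)
    (H : Matrix (Fin N) (Fin N) ℂ) (hH : H.IsHermitian) (E₁ : ℝ)
    (hsimple : ∃! i, hH.eigenvalues i = E₁)
    (hmin : ∀ i, hH.eigenvalues i = E₁ ∨ E₁ + Δ ≤ hH.eigenvalues i)
    (v : Fin N → ℂ) (hv : H.mulVec v = (E₁ : ℂ) • v)
    (hvunit : dotProduct (star v) v = 1)
    (A : Matrix (Fin N) (Fin N) ℂ) (hA : A.IsHermitian) :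
    norm
        ((Matrix.trace (NormedSpace.exp (((-(2 * β) : ℝ) : ℂ) • H) * A)) /
            (Matrix.trace (NormedSpace.exp (((-(2 * β) : ℝ) : ℂ) • H))) -
          dotProduct (star v) (A.mulVec v)) ≤
      2 * ‖Matrix.toEuclideanCLM (𝕜 := ℂ) A‖ * ((N : ℝ) - 1) * Real.exp (-(2 * β * Δ)) := by
  obtain ⟨k, hk, hku⟩ := hsimple
  obtain ⟨U, hUdef⟩ : ∃ U : Matrix (Fin N) (Fin N) ℂ, U = (hH.eigenvectorUnitary : Matrix (Fin N) (Fin N) ℂ) := ⟨_, rfl⟩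
  have hU1 : Uᴴ * U = 1 := by rw [hUdef]; exact Unitary.coe_star_mul_self hH.eigenvectorUnitary
  have hU2 : U * Uᴴ = 1 := by rw [hUdef]; exact Unitary.coe_mul_star_self hH.eigenvectorUnitary
  have hspec : H = U * diagonal (fun i => (hH.eigenvalues i : ℂ)) * Uᴴ := by
    rw [hUdef]; exact hH.spectral_theorem
  generalize hH.eigenvalues = l at *
  set p : Fin N → ℝ := fun i => Real.exp (-(2 * β) * l i) with hp
  have hexp : NormedSpace.exp (((-(2 * β) : ℝ) : ℂ) • H) = U * diagonal (fun i => (p i : ℂ)) * Uᴴ := by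
    have hinv : U⁻¹ = Uᴴ := Matrix.inv_eq_right_inv hU2
    have hUu : IsUnit U := ⟨⟨U, Uᴴ, hU2, hU1⟩, rfl⟩
    have : ((-(2 * β) : ℝ) : ℂ) • H = U * diagonal (fun i => ((-(2 * β) * l i : ℝ) : ℂ)) * U⁻¹ := by
      rw [hinv, hspec, ← Matrix.smul_mul, ← Matrix.mul_smul, ← Matrix.diagonal_smul]
      congr 3
      ext i
      simp
    rw [this, Matrix.exp_conj _ _ hUu, Matrix.exp_diagonal, hinv]
    congr 3
    ext i
    rw [Pi.coe_exp, ← Complex.exp_eq_exp_ℂ, hp]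
    push_cast; rfl
  set B := Uᴴ * A * U with hB
  have htrA : Matrix.trace (NormedSpace.exp (((-(2 * β) : ℝ) : ℂ) • H) * A) = ∑ i, (p i : ℂ) * B i i := by
    rw [hexp, Matrix.mul_assoc, Matrix.mul_assoc, Matrix.trace_mul_comm, Matrix.mul_assoc, ← hB]
    simp [Matrix.trace]
  have htr : Matrix.trace (NormedSpace.exp (((-(2 * β) : ℝ) : ℂ) • H)) = ∑ i, (p i : ℂ) := by
    rw [hexp, Matrix.mul_assoc, Matrix.trace_mul_comm, Matrix.mul_assoc, hU1]
    simp [Matrix.trace]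
  set w := Uᴴ *ᵥ v with hw
  have hvw : v = U *ᵥ w := by rw [hw, Matrix.mulVec_mulVec, hU2, Matrix.one_mulVec]
  have hDw : diagonal (fun i => (l i : ℂ)) *ᵥ w = (E₁ : ℂ) • w := by
    have := congrArg (fun x => Uᴴ *ᵥ x) hv
    simp only [Matrix.mulVec_smul, ← hw] at this
    rw [← this, hspec, hw]
    simp only [Matrix.mulVec_mulVec, ← Matrix.mul_assoc, hU1, Matrix.one_mul]
  have hw0 : ∀ i, i ≠ k → w i = 0 := by
    intro i hi
    have h := congrFun hDw i
    rw [Matrix.mulVec_diagonal, Pi.smul_apply, smul_eq_mul] at h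
    have hne : (l i : ℂ) ≠ (E₁ : ℂ) := by
      intro h'
      exact hi (hku i (by exact_mod_cast h'))
    exact (mul_eq_mul_right_iff.mp h).resolve_left hne
  have hws : w = Pi.single k (w k) := by
    ext i
    by_cases h : i = k
    · subst h; simp
    · simp [h, hw0 i h]
  have hww : star w ⬝ᵥ w = 1 := by
    rw [hw, Matrix.star_mulVec, ← Matrix.dotProduct_mulVec, Matrix.mulVec_mulVec,
      Matrix.conjTranspose_conjTranspose, hU2, Matrix.one_mulVec, hvunit]
  have hwk : star (w k) * w k = 1 := by
    rw [hws] at hww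
    simpa using hww
  have hBk : star v ⬝ᵥ (A *ᵥ v) = B k k := by
    have : star v ⬝ᵥ (A *ᵥ v) = star w ⬝ᵥ (B *ᵥ w) := by
      rw [hvw, Matrix.star_mulVec, ← Matrix.dotProduct_mulVec, hB]
      simp only [Matrix.mulVec_mulVec, ← Matrix.mul_assoc]
    rw [this]
    have h2 : star w ⬝ᵥ (B *ᵥ w) = star (w k) * (B k k * w k) := by
      rw [dotProduct, Finset.sum_eq_single k, Matrix.mulVec, dotProduct, Finset.sum_eq_single k]
      · rfl
      · intro i _ h; simp [hw0 i h]
      · simp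
      · intro i _ h; simp [hw0 i h]
      · simp
    rw [h2]; linear_combination (B k k) * hwk
  have hBn : ∀ i, ‖B i i‖ ≤ ‖Matrix.toEuclideanCLM (𝕜 := ℂ) A‖ := by
    intro i
    set u : EuclideanSpace ℂ (Fin N) := WithLp.toLp 2 (fun j => U j i) with hu
    have hin : inner ℂ u (Matrix.toEuclideanCLM (𝕜 := ℂ) A u) = B i i := by
      rw [EuclideanSpace.inner_eq_star_dotProduct, hB, Matrix.mul_assoc]
      simp [hu, Matrix.mul_apply, dotProduct, Matrix.mulVec, mul_comm]
    have hun : ‖u‖ = 1 := by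
      have h1 : inner ℂ u u = (1 : ℂ) := by
        rw [EuclideanSpace.inner_eq_star_dotProduct]
        have := congrFun (congrFun hU1 i) i
        rw [Matrix.mul_apply] at this
        simpa [hu, dotProduct, mul_comm] using this
      rw [norm_eq_sqrt_re_inner (𝕜 := ℂ), h1]; simp
    rw [← hin]
    calc _ ≤ ‖u‖ * ‖Matrix.toEuclideanCLM (𝕜 := ℂ) A u‖ := norm_inner_le_norm _ _
      _ ≤ ‖u‖ * (‖Matrix.toEuclideanCLM (𝕜 := ℂ) A‖ * ‖u‖) := by
        gcongr; exact ContinuousLinearMap.le_opNorm _ _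
      _ = _ := by rw [hun]; ring
  rw [htrA, htr, hBk]
  refine stmt8_avg p (fun i => B i i) _ _ k (fun i => Real.exp_pos _) hBn ?_
  intro i hi
  have hl : E₁ + Δ ≤ l i := (hmin i).resolve_left (fun h => hi (hku i h))
  rw [hp]
  simp only
  rw [← Real.exp_add, hk]
  apply Real.exp_le_exp.mpr
  nlinarith
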